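/- arXiv:1808.10101 — 3 statements merged into one kernel-verified Lean document; each statement's English description precedes it below -/
import Mathlib

section
/- Deterministic (pathwise) form of the convergence bound for DP-ADMM with convex non-smooth objectives (core of Theorem 2). Let E be a finite-dimensional real inner product space, n ≥ 1 and t ≥ 1 natural numbers, ρ > 0. For each i ∈ {1,…,n}: f_i : E → ℝ is convex and η_i^1 ≥ η_i^2 ≥ … ≥ η_i^t > 0. Suppose given w̃_i^k (0 ≤ k ≤ t), w^k (0 ≤ k ≤ t), γ_i^k (0 ≤ k ≤ t), and ξ_i^k, g_i^k (1 ≤ k ≤ t), all in E, such that for every i and 1 ≤ k ≤ t: (i) g_i^k is a subgradient of f_i at w̃_i^{k−1} (f_i(z) ≥ f_i(w̃_i^{k−1}) + ⟨g_i^k, z − w̃_i^{k−1}⟩ for all z); (ii) w̃_i^k = (ρ + 1/η_i^k)⁻¹·(−g_i^k + γ_i^{k−1} + ρ·w^{k−1} + (1/η_i^k)·w̃_i^{k−1}) + ξ_i^k; (iii) w^k = (1/n)·Σ_i w̃_i^k − (1/(nρ))·Σ_i γ_i^{k−1}; (iv) γ_i^k = γ_i^{k−1} − ρ·(w̃_i^k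 − w^k). Suppose in addition γ_i^0 = 0 for all i, and that w* ∈ E and constants c, c_w ≥ 0 satisfy ‖w* − w̃_i^k‖ ≤ c for all i and all 0 ≤ k ≤ t−1, and ‖w* − w^0‖ ≤ c_w. Define ā_i = (1/t)·Σ_{k=0}^{t−1} w̃_i^k, b̄_i = (1/t)·Σ_{k=1}^{t} w̃_i^k, and w̄ = (1/t)·Σ_{k=1}^{t} w^k. Then for every β ≥ 0: Σ_i ( f_i(ā_i) − f_i(w*) + β·‖b̄_i − w̄‖ ) ≤ (1/t)·Σ_i Σ_{k=1}^{t} [ (η_i^k/2)·‖g_i^k − (ρ + 1/η_i^k)·ξ_i^k‖² − (ρ + 1/η_i^k)·⟨ξ_i^k, w* − w̃_i^{k−1}⟩ ] + (1/t)·Σ_i c²/(2·η_i^t) + n·ρ·c_w²/(2t) + n·β²/(2ρt). -/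
open scoped RealInnerProductSpace
open Finset

/-! Convexity and the subgradient inequality reduce the claim to a bound on `∑ ⟪g, x - z⟫` along the
local iterates `x`, for the comparison point `z = w*`. Put `G = g - (ρ + 1/η) ξ`. The primal and
dual updates together say that `G = γ' + ρ (w - w') + (1/η) (x - x')`, primes marking the new
iterates. Split `⟪G, x - z⟫ = ⟪G, x - x'⟫ + ⟪G, x' - z⟫`: the first term is controlled by Young's
inequality, and in the second the three-point identity turns every contribution into a difference
of squared norms, up to cross terms that cancel on summing over the agents because the dual
variables always sum to zero. Summation over time telescopes the differences, with varying weights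
`1 / (2η)` in the local one, and leaves a term `-‖γᵗ‖² / (2ρ)`. Since the consensus residual of
the averages is `-γᵗ / (ρ t)`, this negative term absorbs the penalty `β ‖b̄ - w̄‖` at the price of
`β² / (2ρt)`. -/

section Preliminaries

lemma sum_Icc_one_eq_sum_range {M : Type*} [AddCommMonoid M] (h : ℕ → M) (t : ℕ) :
    ∑ k ∈ Icc 1 t, h k = ∑ k ∈ range t, h (k + 1) := by
  rw [range_eq_Ico, sum_Ico_add' h 0 t 1]
  rfl

lemma sum_range_succ_mul_sub_le {R : Type*} [Ring R] [PartialOrder R] [IsOrderedRing R]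
    {s a : ℕ → R} {C : R} {m : ℕ} (hs₀ : 0 ≤ s 0) (hs : ∀ k < m, s k ≤ s (k + 1))
    (ha : ∀ k ≤ m, a k ≤ C) :
    ∑ k ∈ range (m + 1), s k * (a k - a (k + 1)) ≤ s m * (C - a (m + 1)) := by
  induction m with
  | zero =>
    rw [zero_add, sum_range_one]
    exact mul_le_mul_of_nonneg_left (sub_le_sub_right (ha 0 le_rfl) _) hs₀
  | succ m ih =>
    have hC : 0 ≤ C - a (m + 1) := sub_nonneg.mpr (ha _ le_rfl)
    calc ∑ k ∈ range (m + 1 + 1), s k * (a k - a (k + 1))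
        ≤ s m * (C - a (m + 1)) + s (m + 1) * (a (m + 1) - a (m + 1 + 1)) := by
          rw [sum_range_succ]
          gcongr
          exact ih (fun k hk => hs k (by omega)) (fun k hk => ha k (by omega))
      _ ≤ s (m + 1) * (C - a (m + 1)) + s (m + 1) * (a (m + 1) - a (m + 1 + 1)) := by
          gcongr
          exact hs m m.lt_succ_self
      _ = s (m + 1) * (C - a (m + 1 + 1)) := by rw [← mul_add, sub_add_sub_cancel]

lemma mul_le_half_mul_sq_add_sq_div {K : Type*} [Field K] [LinearOrder K] [IsStrictOrderedRing K]
    {r : K} (hr : 0 < r) (a b : K) : a * b ≤ r / 2 * a ^ 2 + b ^ 2 / (2 * r) := by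
  have hsq : r / 2 * a ^ 2 + b ^ 2 / (2 * r) - a * b = (r * a - b) ^ 2 / (2 * r) := by
    field_simp
    ring
  have : 0 ≤ (r * a - b) ^ 2 / (2 * r) := by positivity
  linarith

lemma sum_inv_mul_norm_sub_sq_le {V : Type*} [SeminormedAddCommGroup V] {η : ℕ → ℝ} {t : ℕ}
    (ht : 1 ≤ t) (hη : ∀ k < t, 0 < η (k + 1)) (hη_anti : ∀ k, k + 1 < t → η (k + 2) ≤ η (k + 1))
    {x : ℕ → V} {z : V} {c : ℝ} (hc : ∀ k < t, ‖z - x k‖ ≤ c) :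
    ∑ k ∈ range t, (2 * η (k + 1))⁻¹ * (‖x k - z‖ ^ 2 - ‖x (k + 1) - z‖ ^ 2)
      ≤ c ^ 2 / (2 * η t) := by
  obtain ⟨m, rfl⟩ := Nat.exists_eq_add_of_le' ht
  have hpos : ∀ k ≤ m, 0 < 2 * η (k + 1) := fun k hk =>
    mul_pos two_pos (hη k (Nat.lt_succ_of_le hk))
  calc ∑ k ∈ range (m + 1), (2 * η (k + 1))⁻¹ * (‖x k - z‖ ^ 2 - ‖x (k + 1) - z‖ ^ 2)
      ≤ (2 * η (m + 1))⁻¹ * (c ^ 2 - ‖x (m + 1) - z‖ ^ 2) := by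
        refine sum_range_succ_mul_sub_le (s := fun k => (2 * η (k + 1))⁻¹)
          (a := fun k => ‖x k - z‖ ^ 2) (inv_pos.mpr (hpos 0 m.zero_le)).le
          (fun k hk => ?_) (fun k hk => ?_)
        · exact inv_anti₀ (hpos (k + 1) hk)
            (mul_le_mul_of_nonneg_left (hη_anti k (Nat.succ_lt_succ hk)) two_pos.le)
        · rw [norm_sub_rev]
          exact pow_le_pow_left₀ (norm_nonneg _) (hc k (Nat.lt_succ_of_le hk)) 2
    _ ≤ (2 * η (m + 1))⁻¹ * c ^ 2 :=
        mul_le_mul_of_nonneg_left (sub_le_self _ (sq_nonneg _)) (inv_pos.mpr (hpos m le_rfl)).le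
    _ = c ^ 2 / (2 * η (m + 1)) := (div_eq_inv_mul _ _).symm

variable {E : Type*} [NormedAddCommGroup E] [InnerProductSpace ℝ E]

lemma real_inner_le_half_mul_norm_sq_add {r : ℝ} (hr : 0 < r) (x y : E) :
    ⟪x, y⟫ ≤ r / 2 * ‖x‖ ^ 2 + ‖y‖ ^ 2 / (2 * r) :=
  (real_inner_le_norm x y).trans (mul_le_half_mul_sq_add_sq_div hr _ _)

lemma real_inner_sub_sub_eq_three_point (x y z : E) :
    ⟪x - y, y - z⟫ = (‖x - z‖ ^ 2 - ‖y - z‖ ^ 2 - ‖x - y‖ ^ 2) / 2 := by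
  rw [← sub_add_sub_cancel x y z, norm_add_sq_real]
  ring

lemma map_average_sub_le_average_inner {f : E → ℝ} (hf : ConvexOn ℝ Set.univ f)
    {t : ℕ} (ht : 1 ≤ t) {x g : ℕ → E} {z : E}
    (hg : ∀ k < t, f (x k) + ⟪g k, z - x k⟫ ≤ f z) :
    f ((1 / (t : ℝ)) • ∑ k ∈ range t, x k) - f z
      ≤ 1 / (t : ℝ) * ∑ k ∈ range t, ⟪g k, x k - z⟫ := by
  have ht₀ : (t : ℝ) ≠ 0 := by positivity
  have hJensen : f ((1 / (t : ℝ)) • ∑ k ∈ range t, x k)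
      ≤ 1 / (t : ℝ) * ∑ k ∈ range t, f (x k) := by
    simpa only [← smul_sum, ← mul_sum, smul_eq_mul] using
      hf.map_sum_le (t := range t) (w := fun _ => 1 / (t : ℝ)) (p := x)
        (fun _ _ => by positivity) (by simp [ht₀]) (fun _ _ => Set.mem_univ _)
  have hgap : ∑ k ∈ range t, f (x k) - t * f z ≤ ∑ k ∈ range t, ⟪g k, x k - z⟫ := by
    rw [← nsmul_eq_mul, ← card_range t, ← sum_const, card_range, ← sum_sub_distrib]
    refine sum_le_sum fun k hk => ?_
    have hk' := hg k (mem_range.mp hk)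
    rw [← neg_sub (x k) z, inner_neg_right] at hk'
    linarith
  calc f ((1 / (t : ℝ)) • ∑ k ∈ range t, x k) - f z
      ≤ 1 / (t : ℝ) * ∑ k ∈ range t, f (x k) - f z := by gcongr
    _ = 1 / (t : ℝ) * (∑ k ∈ range t, f (x k) - t * f z) := by field_simp
    _ ≤ 1 / (t : ℝ) * ∑ k ∈ range t, ⟪g k, x k - z⟫ := by gcongr

end Preliminaries

section OneStep

lemma sub_smul_eq_of_primal_of_dual {K V : Type*} [Field K] [AddCommGroup V] [Module K V]
    {ρ η : K} (hμ : ρ + 1 / η ≠ 0) {g ξ x x' w w' γ γ' : V}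
    (hx : x' = (ρ + 1 / η)⁻¹ • (-g + γ + ρ • w + (1 / η) • x) + ξ)
    (hγ : γ' = γ - ρ • (x' - w')) :
    g - (ρ + 1 / η) • ξ = γ' + ρ • (w - w') + (1 / η) • (x - x') := by
  have hopt : (ρ + 1 / η) • (x' - ξ) = -g + γ + ρ • w + (1 / η) • x := by
    rw [hx, add_sub_cancel_right, smul_inv_smul₀ hμ]
  have hg : g = γ + ρ • w + (1 / η) • x - (ρ + 1 / η) • (x' - ξ) := by
    rw [hopt]
    abel
  rw [hg, hγ]
  module

variable {E : Type*} [NormedAddCommGroup E] [InnerProductSpace ℝ E]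

/-- The contribution of one noisy linearized step to the regret bound: `g` is the subgradient, `ξ`
the noise, and `d` the displacement from the current iterate to the comparison point. -/
noncomputable def stepError (ρ η : ℝ) (g ξ d : E) : ℝ :=
  η / 2 * ‖g - (ρ + 1 / η) • ξ‖ ^ 2 - (ρ + 1 / η) * ⟪ξ, d⟫

lemma inner_residual_sub_le {ρ : ℝ} (hρ : 0 < ρ) {x' w' γ γ' : E}
    (hγ : γ' = γ - ρ • (x' - w')) (η : ℝ) (x w z : E) :
    ⟪γ' + ρ • (w - w') + (1 / η) • (x - x'), x' - z⟫
      ≤ (‖x - z‖ ^ 2 - ‖x' - z‖ ^ 2 - ‖x - x'‖ ^ 2) / (2 * η)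
        + (‖γ‖ ^ 2 - ‖γ'‖ ^ 2) / (2 * ρ) + ρ / 2 * (‖w - z‖ ^ 2 - ‖w' - z‖ ^ 2)
        + (⟪γ', w' - z⟫ + ⟪w - w', γ - γ'⟫) := by
  have hstep : γ - γ' = ρ • (x' - w') := by rw [hγ, sub_sub_cancel]
  have hprox : 1 / η * ⟪x - x', x' - z⟫
      = (‖x - z‖ ^ 2 - ‖x' - z‖ ^ 2 - ‖x - x'‖ ^ 2) / (2 * η) := by
    rw [real_inner_sub_sub_eq_three_point]
    ring
  have hdual : ⟪γ', x' - w'⟫ ≤ (‖γ‖ ^ 2 - ‖γ'‖ ^ 2) / (2 * ρ) := by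
    have h := real_inner_sub_sub_eq_three_point γ γ' 0
    rw [sub_zero, sub_zero, hstep, real_inner_smul_left, real_inner_comm] at h
    rw [le_div_iff₀ (by positivity)]
    linarith [sq_nonneg ‖ρ • (x' - w')‖]
  have hglobal : ⟪w - w', w' - z⟫ ≤ (‖w - z‖ ^ 2 - ‖w' - z‖ ^ 2) / 2 := by
    rw [real_inner_sub_sub_eq_three_point]
    linarith [sq_nonneg ‖w - w'‖]
  have hcross : ⟪w - w', γ - γ'⟫ = ρ * ⟪w - w', x' - w'⟫ := by
    rw [hstep, real_inner_smul_right]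
  calc ⟪γ' + ρ • (w - w') + (1 / η) • (x - x'), x' - z⟫
      = 1 / η * ⟪x - x', x' - z⟫ + ⟪γ', x' - w'⟫ + ρ * ⟪w - w', w' - z⟫
          + (⟪γ', w' - z⟫ + ρ * ⟪w - w', x' - w'⟫) := by
        rw [inner_add_left, inner_add_left, real_inner_smul_left, real_inner_smul_left,
          ← sub_add_sub_cancel x' w' z, inner_add_right γ', inner_add_right (w - w')]
        ring
    _ ≤ _ := by
        rw [hprox, hcross]
        linarith [mul_le_mul_of_nonneg_left hglobal hρ.le]

lemma inner_sub_le_of_primal_of_dual {ρ η : ℝ} (hρ : 0 < ρ) (hη : 0 < η)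
    {g ξ x x' w w' γ γ' : E}
    (hx : x' = (ρ + 1 / η)⁻¹ • (-g + γ + ρ • w + (1 / η) • x) + ξ)
    (hγ : γ' = γ - ρ • (x' - w')) (z : E) :
    ⟪g, x - z⟫ ≤ stepError ρ η g ξ (z - x)
      + (2 * η)⁻¹ * (‖x - z‖ ^ 2 - ‖x' - z‖ ^ 2) + (‖γ‖ ^ 2 - ‖γ'‖ ^ 2) / (2 * ρ)
      + ρ / 2 * (‖w - z‖ ^ 2 - ‖w' - z‖ ^ 2) + (⟪γ', w' - z⟫ + ⟪w - w', γ - γ'⟫) := by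
  have hG := sub_smul_eq_of_primal_of_dual (by positivity : ρ + 1 / η ≠ 0) hx hγ
  have hresidual := inner_residual_sub_le hρ hγ η x w z
  rw [← hG] at hresidual
  have hYoung := real_inner_le_half_mul_norm_sq_add hη (g - (ρ + 1 / η) • ξ) (x - x')
  have hsplit : ⟪g, x - z⟫ = ⟪g - (ρ + 1 / η) • ξ, x - x'⟫
      + ⟪g - (ρ + 1 / η) • ξ, x' - z⟫ - (ρ + 1 / η) * ⟪ξ, z - x⟫ := by
    rw [← inner_add_right, sub_add_sub_cancel, inner_sub_left, real_inner_smul_left,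
      ← neg_sub x z, inner_neg_right]
    ring
  rw [sub_div, div_eq_inv_mul (‖x - z‖ ^ 2 - ‖x' - z‖ ^ 2)] at hresidual
  rw [hsplit, stepError]
  linarith

end OneStep

/-- A run of `t` iterations of linearized consensus ADMM in which every local update is perturbed:
`x i` are the local iterates of agent `i`, `w` the global ones, `γ i` the dual variables, `g i` the
linearizations of the local objectives and `ξ i` the perturbations. Step sizes, linearizations and
perturbations carry the index of the iterate they produce, so their values at `0` are irrelevant.
The vectors `g i k` are not tied to an objective here. -/
structure IsPerturbedADMM {ι E : Type*} [Fintype ι] [AddCommGroup E] [Module ℝ E]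
    (ρ : ℝ) (t : ℕ) (η : ι → ℕ → ℝ) (g ξ x : ι → ℕ → E) (w : ℕ → E) (γ : ι → ℕ → E) : Prop where
  primal : ∀ i, ∀ k < t, x i (k + 1) = (ρ + 1 / η i (k + 1))⁻¹ •
    (-(g i (k + 1)) + γ i k + ρ • w k + (1 / η i (k + 1)) • x i k) + ξ i (k + 1)
  global : ∀ k < t, w (k + 1) = (1 / (Fintype.card ι : ℝ)) • ∑ i, x i (k + 1)
    - (1 / ((Fintype.card ι : ℝ) * ρ)) • ∑ i, γ i k
  dual : ∀ i, ∀ k < t, γ i (k + 1) = γ i k - ρ • (x i (k + 1) - w (k + 1))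
  dual_zero : ∀ i, γ i 0 = 0

namespace IsPerturbedADMM

section Module

variable {ι E : Type*} [Fintype ι] [AddCommGroup E] [Module ℝ E] {ρ : ℝ} {t : ℕ}
  {η : ι → ℕ → ℝ} {g ξ x : ι → ℕ → E} {w : ℕ → E} {γ : ι → ℕ → E}

lemma sum_dual_eq_zero [Nonempty ι] (h : IsPerturbedADMM ρ t η g ξ x w γ) (hρ : ρ ≠ 0) :
    ∀ k ≤ t, ∑ i, γ i k = 0
  | 0, _ => by simp only [h.dual_zero, sum_const_zero]
  | k + 1, hk => by
    have hcard : (Fintype.card ι : ℝ) ≠ 0 := Nat.cast_ne_zero.mpr Fintype.card_ne_zero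
    have hw : (ρ * Fintype.card ι) • w (k + 1) = ρ • ∑ i, x i (k + 1) - ∑ i, γ i k := by
      rw [h.global k hk, smul_sub, smul_smul, smul_smul, mul_assoc, mul_one_div_cancel hcard,
        mul_one, mul_comm ρ, mul_one_div_cancel (mul_ne_zero hcard hρ), one_smul]
    simp only [h.dual _ k hk, sum_sub_distrib, ← smul_sum, sum_const, card_univ]
    rw [← Nat.cast_smul_eq_nsmul ℝ, smul_sub, smul_smul, hw]
    abel

lemma smul_sum_sub_eq_neg_dual (h : IsPerturbedADMM ρ t η g ξ x w γ) (i : ι) :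
    ρ • ∑ k ∈ range t, (x i (k + 1) - w (k + 1)) = -γ i t := by
  have hstep : ∀ k ∈ range t, ρ • (x i (k + 1) - w (k + 1)) = γ i k - γ i (k + 1) := by
    intro k hk
    rw [h.dual i k (mem_range.mp hk), sub_sub_cancel]
  rw [smul_sum, sum_congr rfl hstep, sum_range_sub', h.dual_zero, zero_sub]

end Module

variable {ι E : Type*} [Fintype ι] [NormedAddCommGroup E] [InnerProductSpace ℝ E] {ρ : ℝ} {t : ℕ}
  {η : ι → ℕ → ℝ} {g ξ x : ι → ℕ → E} {w : ℕ → E} {γ : ι → ℕ → E}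

lemma norm_average_sub_average (h : IsPerturbedADMM ρ t η g ξ x w γ) (hρ : 0 < ρ) (i : ι) :
    ‖(1 / (t : ℝ)) • ∑ k ∈ range t, x i (k + 1) - (1 / (t : ℝ)) • ∑ k ∈ range t, w (k + 1)‖
      = ‖γ i t‖ / (ρ * t) := by
  have hsum : ∑ k ∈ range t, (x i (k + 1) - w (k + 1)) = ρ⁻¹ • -γ i t := by
    rw [← h.smul_sum_sub_eq_neg_dual i, inv_smul_smul₀ hρ.ne']
  rw [← smul_sub, ← sum_sub_distrib, hsum, smul_smul, norm_smul, norm_neg,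
    Real.norm_of_nonneg (by positivity)]
  ring

lemma mul_norm_average_sub_average_le (h : IsPerturbedADMM ρ t η g ξ x w γ) (hρ : 0 < ρ)
    (β : ℝ) (i : ι) :
    β * ‖(1 / (t : ℝ)) • ∑ k ∈ range t, x i (k + 1) - (1 / (t : ℝ)) • ∑ k ∈ range t, w (k + 1)‖
      ≤ 1 / (t : ℝ) * (‖γ i t‖ ^ 2 / (2 * ρ)) + β ^ 2 / (2 * ρ * t) := by
  calc _ = (2 * β * ‖γ i t‖) / (2 * ρ * t) := by
        rw [h.norm_average_sub_average hρ, mul_assoc 2 β, mul_assoc 2 ρ,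
          mul_div_mul_left _ _ two_ne_zero, mul_div_assoc]
    _ ≤ (β ^ 2 + ‖γ i t‖ ^ 2) / (2 * ρ * t) := by
        gcongr
        exact two_mul_le_add_sq β ‖γ i t‖
    _ = _ := by ring

lemma sum_cross_eq_zero [Nonempty ι] (h : IsPerturbedADMM ρ t η g ξ x w γ) (hρ : ρ ≠ 0)
    (z : E) :
    ∑ i, ∑ k ∈ range t, (⟪γ i (k + 1), w (k + 1) - z⟫ + ⟪w k - w (k + 1), γ i k - γ i (k + 1)⟫)
      = 0 := by
  rw [sum_comm]
  refine sum_eq_zero fun k hk => ?_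
  have hk : k < t := mem_range.mp hk
  rw [sum_add_distrib, ← sum_inner, ← inner_sum, sum_sub_distrib, h.sum_dual_eq_zero hρ k hk.le,
    h.sum_dual_eq_zero hρ (k + 1) hk, sub_zero, inner_zero_left, inner_zero_right, add_zero]

lemma sum_inner_le (h : IsPerturbedADMM ρ t η g ξ x w γ) (hρ : 0 < ρ) (ht : 1 ≤ t) {i : ι}
    (hη : ∀ k < t, 0 < η i (k + 1)) (hη_anti : ∀ k, k + 1 < t → η i (k + 2) ≤ η i (k + 1))
    {z : E} {c : ℝ} (hc : ∀ k < t, ‖z - x i k‖ ≤ c) :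
    ∑ k ∈ range t, ⟪g i (k + 1), x i k - z⟫
      ≤ ∑ k ∈ range t, stepError ρ (η i (k + 1)) (g i (k + 1)) (ξ i (k + 1)) (z - x i k)
        + c ^ 2 / (2 * η i t) - ‖γ i t‖ ^ 2 / (2 * ρ) + ρ / 2 * ‖w 0 - z‖ ^ 2
        + ∑ k ∈ range t,
            (⟪γ i (k + 1), w (k + 1) - z⟫ + ⟪w k - w (k + 1), γ i k - γ i (k + 1)⟫) := by
  have hstep := sum_le_sum fun k hk =>
    inner_sub_le_of_primal_of_dual hρ (hη k (mem_range.mp hk))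
      (h.primal i k (mem_range.mp hk)) (h.dual i k (mem_range.mp hk)) z
  have hprox := sum_inv_mul_norm_sub_sq_le ht hη hη_anti hc
  have hdual : ∑ k ∈ range t, (‖γ i k‖ ^ 2 - ‖γ i (k + 1)‖ ^ 2) / (2 * ρ)
      = -(‖γ i t‖ ^ 2 / (2 * ρ)) := by
    rw [← sum_div, sum_range_sub' (fun k => ‖γ i k‖ ^ 2), h.dual_zero, norm_zero]
    ring
  have hglobal : ∑ k ∈ range t, ρ / 2 * (‖w k - z‖ ^ 2 - ‖w (k + 1) - z‖ ^ 2)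
      ≤ ρ / 2 * ‖w 0 - z‖ ^ 2 := by
    rw [← mul_sum, sum_range_sub' (fun k => ‖w k - z‖ ^ 2)]
    gcongr
    exact sub_le_self _ (sq_nonneg _)
  rw [sum_add_distrib, sum_add_distrib, sum_add_distrib, sum_add_distrib, hdual] at hstep
  linarith

lemma sum_sum_inner_le [Nonempty ι] (h : IsPerturbedADMM ρ t η g ξ x w γ) (hρ : 0 < ρ)
    (ht : 1 ≤ t) (hη : ∀ i, ∀ k < t, 0 < η i (k + 1))
    (hη_anti : ∀ i k, k + 1 < t → η i (k + 2) ≤ η i (k + 1))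
    {z : E} {c : ℝ} (hc : ∀ i, ∀ k < t, ‖z - x i k‖ ≤ c) :
    ∑ i, ∑ k ∈ range t, ⟪g i (k + 1), x i k - z⟫
      ≤ ∑ i, ∑ k ∈ range t, stepError ρ (η i (k + 1)) (g i (k + 1)) (ξ i (k + 1)) (z - x i k)
        + ∑ i, c ^ 2 / (2 * η i t) - ∑ i, ‖γ i t‖ ^ 2 / (2 * ρ)
        + Fintype.card ι * (ρ / 2 * ‖w 0 - z‖ ^ 2) := by
  refine (sum_le_sum fun i _ => h.sum_inner_le hρ ht (hη i) (hη_anti i) (hc i)).trans_eq ?_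
  rw [sum_add_distrib, h.sum_cross_eq_zero hρ.ne', add_zero, sum_add_distrib, sum_sub_distrib,
    sum_add_distrib, sum_const, card_univ, nsmul_eq_mul]

end IsPerturbedADMM

theorem dp_admm_convergence_nonsmooth_general
    {ι E : Type*} [Fintype ι] [Nonempty ι] [NormedAddCommGroup E] [InnerProductSpace ℝ E]
    {t : ℕ} (ht : 1 ≤ t) {ρ : ℝ} (hρ : 0 < ρ)
    {f : ι → E → ℝ} (hf : ∀ i, ConvexOn ℝ Set.univ (f i))
    {η : ι → ℕ → ℝ} (hη : ∀ i, ∀ k < t, 0 < η i (k + 1))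
    (hη_anti : ∀ i k, k + 1 < t → η i (k + 2) ≤ η i (k + 1))
    {g ξ x : ι → ℕ → E} {w : ℕ → E} {γ : ι → ℕ → E} (h : IsPerturbedADMM ρ t η g ξ x w γ)
    (hg : ∀ i, ∀ k < t, ∀ z, f i (x i k) + ⟪g i (k + 1), z - x i k⟫ ≤ f i z)
    {z : E} {c c_w : ℝ} (hc : ∀ i, ∀ k < t, ‖z - x i k‖ ≤ c) (hc_w : ‖z - w 0‖ ≤ c_w) (β : ℝ) :
    ∑ i, (f i ((1 / (t : ℝ)) • ∑ k ∈ range t, x i k) - f i z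
          + β * ‖(1 / (t : ℝ)) • ∑ k ∈ range t, x i (k + 1)
                  - (1 / (t : ℝ)) • ∑ k ∈ range t, w (k + 1)‖)
      ≤ 1 / (t : ℝ) * ∑ i, ∑ k ∈ range t,
          stepError ρ (η i (k + 1)) (g i (k + 1)) (ξ i (k + 1)) (z - x i k)
        + 1 / (t : ℝ) * ∑ i, c ^ 2 / (2 * η i t)
        + (Fintype.card ι : ℝ) * ρ * c_w ^ 2 / (2 * (t : ℝ))
        + (Fintype.card ι : ℝ) * β ^ 2 / (2 * ρ * (t : ℝ)) := by
  have hw₀ : ‖w 0 - z‖ ^ 2 ≤ c_w ^ 2 := by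
    rw [norm_sub_rev]
    exact pow_le_pow_left₀ (norm_nonneg _) hc_w 2
  have hregret : ∑ i, ∑ k ∈ range t, ⟪g i (k + 1), x i k - z⟫ + ∑ i, ‖γ i t‖ ^ 2 / (2 * ρ)
      ≤ ∑ i, ∑ k ∈ range t, stepError ρ (η i (k + 1)) (g i (k + 1)) (ξ i (k + 1)) (z - x i k)
        + ∑ i, c ^ 2 / (2 * η i t) + Fintype.card ι * (ρ / 2 * c_w ^ 2) := by
    have : Fintype.card ι * (ρ / 2 * ‖w 0 - z‖ ^ 2) ≤ Fintype.card ι * (ρ / 2 * c_w ^ 2) := by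
      gcongr
    linarith [h.sum_sum_inner_le hρ ht hη hη_anti hc]
  calc _ ≤ ∑ i, (1 / (t : ℝ) * ∑ k ∈ range t, ⟪g i (k + 1), x i k - z⟫
          + (1 / (t : ℝ) * (‖γ i t‖ ^ 2 / (2 * ρ)) + β ^ 2 / (2 * ρ * t))) :=
        sum_le_sum fun i _ => add_le_add
          (map_average_sub_le_average_inner (hf i) ht fun k hk => hg i k hk z)
          (h.mul_norm_average_sub_average_le hρ β i)
    _ = 1 / (t : ℝ) * (∑ i, ∑ k ∈ range t, ⟪g i (k + 1), x i k - z⟫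
          + ∑ i, ‖γ i t‖ ^ 2 / (2 * ρ)) + Fintype.card ι * (β ^ 2 / (2 * ρ * t)) := by
        rw [sum_add_distrib, sum_add_distrib, ← mul_sum, ← mul_sum, sum_const, card_univ,
          nsmul_eq_mul]
        ring
    _ ≤ 1 / (t : ℝ) * (∑ i, ∑ k ∈ range t,
            stepError ρ (η i (k + 1)) (g i (k + 1)) (ξ i (k + 1)) (z - x i k)
          + ∑ i, c ^ 2 / (2 * η i t) + Fintype.card ι * (ρ / 2 * c_w ^ 2))
          + Fintype.card ι * (β ^ 2 / (2 * ρ * t)) := by gcongr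
    _ = _ := by ring

/-- Deterministic (pathwise) form of the convergence bound for DP-ADMM with convex
non-smooth objectives (core of Theorem 2). -/
theorem dp_admm_convergence_nonsmooth
    {E : Type*} [NormedAddCommGroup E] [InnerProductSpace ℝ E] [FiniteDimensional ℝ E]
    (n t : ℕ) (hn : 1 ≤ n) (ht : 1 ≤ t) (ρ : ℝ) (hρ : 0 < ρ)
    (f : Fin n → E → ℝ) (hf : ∀ i, ConvexOn ℝ Set.univ (f i))
    (η : Fin n → ℕ → ℝ)
    (hηpos : ∀ i k, 1 ≤ k → k ≤ t → 0 < η i k)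
    (hηmono : ∀ i k, 1 ≤ k → k + 1 ≤ t → η i (k + 1) ≤ η i k)
    (wt : Fin n → ℕ → E) (w : ℕ → E) (γ : Fin n → ℕ → E)
    (ξ g : Fin n → ℕ → E)
    (hsub : ∀ i k, 1 ≤ k → k ≤ t → ∀ z : E,
      f i z ≥ f i (wt i (k - 1)) + ⟪g i k, z - wt i (k - 1)⟫)
    (hprimal : ∀ i k, 1 ≤ k → k ≤ t →
      wt i k = (ρ + 1 / η i k)⁻¹ •
        (-(g i k) + γ i (k - 1) + ρ • w (k - 1) + (1 / η i k) • wt i (k - 1)) + ξ i k)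
    (hglobal : ∀ k, 1 ≤ k → k ≤ t →
      w k = (1 / (n : ℝ)) • ∑ i, wt i k - (1 / ((n : ℝ) * ρ)) • ∑ i, γ i (k - 1))
    (hdual : ∀ i k, 1 ≤ k → k ≤ t → γ i k = γ i (k - 1) - ρ • (wt i k - w k))
    (hγ0 : ∀ i, γ i 0 = 0)
    (wstar : E) (c c_w : ℝ) (hc : 0 ≤ c) (hcw : 0 ≤ c_w)
    (hbound : ∀ i k, k ≤ t - 1 → ‖wstar - wt i k‖ ≤ c)
    (hw0 : ‖wstar - w 0‖ ≤ c_w) :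
    ∀ β : ℝ, 0 ≤ β →
      ∑ i, (f i ((1 / (t : ℝ)) • ∑ k ∈ Finset.range t, wt i k) - f i wstar
            + β * ‖(1 / (t : ℝ)) • ∑ k ∈ Finset.Icc 1 t, wt i k
                    - (1 / (t : ℝ)) • ∑ k ∈ Finset.Icc 1 t, w k‖)
      ≤ (1 / (t : ℝ)) * ∑ i, ∑ k ∈ Finset.Icc 1 t,
            (η i k / 2 * ‖g i k - (ρ + 1 / η i k) • ξ i k‖ ^ 2
              - (ρ + 1 / η i k) * ⟪ξ i k, wstar - wt i (k - 1)⟫)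
        + (1 / (t : ℝ)) * ∑ i, c ^ 2 / (2 * η i t)
        + (n : ℝ) * ρ * c_w ^ 2 / (2 * (t : ℝ))
        + (n : ℝ) * β ^ 2 / (2 * ρ * (t : ℝ)) := by
  intro β _
  have : Nonempty (Fin n) := Fin.pos_iff_nonempty.mp hn
  have hrun : IsPerturbedADMM ρ t η g ξ wt w γ :=
    { primal := fun i k hk => hprimal i (k + 1) k.succ_pos hk
      global := fun k hk => by
        simpa only [Fintype.card_fin, Nat.add_sub_cancel] using hglobal (k + 1) k.succ_pos hk
      dual := fun i k hk => hdual i (k + 1) k.succ_pos hk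
      dual_zero := hγ0 }
  simpa only [sum_Icc_one_eq_sum_range, Nat.add_sub_cancel, stepError, Fintype.card_fin] using
    dp_admm_convergence_nonsmooth_general ht hρ hf (fun i k => hηpos i (k + 1) k.succ_pos)
      (fun i k => hηmono i (k + 1) k.succ_pos) hrun (fun i k => hsub i (k + 1) k.succ_pos)
      (fun i k hk => hbound i k (Nat.le_sub_one_of_lt hk)) hw0 β
end

section
/- Per-agent single-iteration inequality for a convex non-smooth objective (inequality (36) in the proof of Lemma 2). Let E be a real inner product space, f : E → ℝ convex, ρ > 0, η > 0, and let w̃₀, w̄₀, γ₀, ξ ∈ E. Let g ∈ E be a subgradient of f at w̃₀ (f(z) ≥ f(w̃₀) + ⟨g, z − w̃₀⟩ for all z ∈ E). Define w̃₁ = (ρ + 1/η)⁻¹·(−g + γ₀ + ρ·w̄₀ + (1/η)·w̃₀) + ξ, let w̄₁ ∈ E be arbitrary, and set γ₁ = γ₀ − ρ·(w̃₁ − w̄₁). Then for every w ∈ E: f(w̃₀) − f(w) + ⟨w̃₁ − w, −γ₁⟩ ≤ (η/2)·‖g − (ρ + 1/η)·ξ‖² − (ρ + 1/η)·⟨ξ,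 w − w̃₀⟩ + (1/(2η))·(‖w − w̃₀‖² − ‖w − w̃₁‖²) + (ρ/2)·(‖w − w̄₀‖² − ‖w − w̄₁‖²) + (1/(2ρ))·‖γ₁ − γ₀‖². -/
open scoped RealInnerProductSpace

/-!
Solving the noisy primal update for the old dual variable gives
`γ₁ = d + (1 / η) • (w̃₁ - w̃₀) + ρ • (w̄₁ - w̄₀)` with `d = g - (ρ + 1 / η) • ξ`: up to the penalty
term, `w̃₁` is a gradient step from `w̃₀` along the perturbed subgradient `d`, and `γ₁` measures by
how much it fails to be one. The gradient step contributes the `η`-terms (three-point identity and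
Young's inequality), the penalty term contributes the `ρ`-terms (four-point identity), and replacing
`g` by `d` in the subgradient inequality contributes the noise term.
-/

section InnerProduct

variable {E : Type*} [SeminormedAddCommGroup E] [InnerProductSpace ℝ E]

theorem two_mul_real_inner_sub_sub (a b c d : E) :
    2 * ⟪a - b, c - d⟫ = ‖a - d‖ ^ 2 + ‖b - c‖ ^ 2 - ‖a - c‖ ^ 2 - ‖b - d‖ ^ 2 := by
  simp only [norm_sub_sq_real, inner_sub_left, inner_sub_right]
  ring

theorem two_mul_real_inner_sub_sub_left (a b c : E) :
    2 * ⟪a - b, a - c⟫ = ‖a - b‖ ^ 2 + ‖a - c‖ ^ 2 - ‖b - c‖ ^ 2 := by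
  rw [two_mul_real_inner_sub_sub, sub_self, norm_zero, norm_sub_rev b a]
  ring

theorem two_mul_real_inner_sub_sub_le (a b c d : E) :
    2 * ⟪a - b, c - d⟫ ≤ ‖a - d‖ ^ 2 + ‖b - c‖ ^ 2 - ‖a - c‖ ^ 2 :=
  (two_mul_real_inner_sub_sub a b c d).trans_le (sub_le_self _ (sq_nonneg _))

theorem real_inner_le_mul_norm_sq_add_mul_norm_sq {η : ℝ} (hη : 0 < η) (x y : E) :
    ⟪x, y⟫ ≤ η / 2 * ‖x‖ ^ 2 + 1 / (2 * η) * ‖y‖ ^ 2 := by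
  have hsquare : 0 ≤ 1 / (2 * η) * ‖η • x - y‖ ^ 2 := by positivity
  have hexpand : 1 / (2 * η) * ‖η • x - y‖ ^ 2 =
      η / 2 * ‖x‖ ^ 2 + 1 / (2 * η) * ‖y‖ ^ 2 - ⟪x, y⟫ := by
    rw [norm_sub_sq_real, real_inner_smul_left, norm_smul, Real.norm_of_nonneg hη.le]
    field_simp
    ring
  linarith

/- For the exact step `y = x - η • d` the residual `d + (1 / η) • (y - x)` vanishes, and this is the
basic inequality in the analysis of the subgradient method. -/
theorem real_inner_sub_inner_gradient_residual_le {η : ℝ} (hη : 0 < η) (d x y w : E) :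
    ⟪d, x - w⟫ - ⟪d + (1 / η) • (y - x), y - w⟫ ≤
      η / 2 * ‖d‖ ^ 2 + 1 / (2 * η) * (‖w - x‖ ^ 2 - ‖w - y‖ ^ 2) := by
  calc ⟪d, x - w⟫ - ⟪d + (1 / η) • (y - x), y - w⟫
      = ⟪d, x - y⟫ - 1 / (2 * η) * (2 * ⟪y - x, y - w⟫) := by
        simp only [inner_add_left, real_inner_smul_left, inner_sub_right]
        ring
    _ = ⟪d, x - y⟫ - 1 / (2 * η) * ‖x - y‖ ^ 2
          + 1 / (2 * η) * (‖w - x‖ ^ 2 - ‖w - y‖ ^ 2) := by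
        rw [two_mul_real_inner_sub_sub_left, norm_sub_rev y x, norm_sub_rev y w,
          norm_sub_rev x w]
        ring
    _ ≤ η / 2 * ‖d‖ ^ 2 + 1 / (2 * η) * (‖w - x‖ ^ 2 - ‖w - y‖ ^ 2) := by
        linarith [real_inner_le_mul_norm_sq_add_mul_norm_sq hη d (x - y)]

end InnerProduct

theorem dual_update_eq_of_noisy_primal_update {K E : Type*} [Field K] [AddCommGroup E] [Module K E]
    {ρ σ : K} (hρσ : ρ + σ ≠ 0) {g γ₀ ξ x₀ x₁ z₀ : E}
    (hx₁ : x₁ = (ρ + σ)⁻¹ • (-g + γ₀ + ρ • z₀ + σ • x₀) + ξ) (z₁ : E) :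
    γ₀ - ρ • (x₁ - z₁) = g - (ρ + σ) • ξ + σ • (x₁ - x₀) + ρ • (z₁ - z₀) := by
  have hupdate : (ρ + σ) • (x₁ - ξ) = -g + γ₀ + ρ • z₀ + σ • x₀ := by
    rw [hx₁, add_sub_cancel_right, smul_inv_smul₀ hρσ]
  have hγ₀ : γ₀ = (ρ + σ) • (x₁ - ξ) + g - ρ • z₀ - σ • x₀ := by
    rw [hupdate]
    abel
  rw [hγ₀]
  module

theorem dp_admm_per_agent_nonsmooth_general
    {E : Type*} [SeminormedAddCommGroup E] [InnerProductSpace ℝ E]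
    {f : E → ℝ} {ρ η : ℝ} (hρ : 0 < ρ) (hη : 0 < η) {wt0 wbar0 γ0 ξ g : E}
    (hg : ∀ z : E, f z ≥ f wt0 + ⟪g, z - wt0⟫) {wt1 : E}
    (hwt1 : wt1 = (ρ + 1 / η)⁻¹ • (-g + γ0 + ρ • wbar0 + (1 / η) • wt0) + ξ)
    {wbar1 γ1 : E} (hγ1 : γ1 = γ0 - ρ • (wt1 - wbar1)) (w : E) :
    f wt0 - f w + ⟪wt1 - w, -γ1⟫ ≤
      η / 2 * ‖g - (ρ + 1 / η) • ξ‖ ^ 2 - (ρ + 1 / η) * ⟪ξ, w - wt0⟫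
      + 1 / (2 * η) * (‖w - wt0‖ ^ 2 - ‖w - wt1‖ ^ 2)
      + ρ / 2 * (‖w - wbar0‖ ^ 2 - ‖w - wbar1‖ ^ 2)
      + 1 / (2 * ρ) * ‖γ1 - γ0‖ ^ 2 := by
  set d := g - (ρ + 1 / η) • ξ with hd
  have hdual : γ1 = d + (1 / η) • (wt1 - wt0) + ρ • (wbar1 - wbar0) :=
    hγ1.trans (dual_update_eq_of_noisy_primal_update (by positivity) hwt1 wbar1)
  have hnoise : ⟪g, w - wt0⟫ = (ρ + 1 / η) * ⟪ξ, w - wt0⟫ - ⟪d, wt0 - w⟫ := by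
    rw [hd, ← neg_sub w wt0, inner_neg_right, inner_sub_left, real_inner_smul_left]
    ring
  have hsplit : ⟪wt1 - w, -γ1⟫ =
      ρ / 2 * (2 * ⟪w - wt1, wbar1 - wbar0⟫) - ⟪d + (1 / η) • (wt1 - wt0), wt1 - w⟫ := by
    rw [hdual, ← neg_sub wt1 w, inner_neg_left, inner_neg_right, inner_add_right,
      real_inner_smul_right, real_inner_comm (d + (1 / η) • (wt1 - wt0))]
    ring
  have hgap : 1 / (2 * ρ) * ‖γ1 - γ0‖ ^ 2 = ρ / 2 * ‖wt1 - wbar1‖ ^ 2 := by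
    rw [hγ1, sub_sub_cancel_left, norm_neg, norm_smul, Real.norm_of_nonneg hρ.le]
    field_simp
  have hstep := real_inner_sub_inner_gradient_residual_le hη d wt0 wt1 w
  have hpenalty := mul_le_mul_of_nonneg_left
    (two_mul_real_inner_sub_sub_le w wt1 wbar1 wbar0) (half_pos hρ).le
  linarith [hg w]

/-- Per-agent single-iteration inequality for a convex non-smooth objective
(inequality (36) in the proof of Lemma 2). -/
theorem dp_admm_per_agent_nonsmooth
    {E : Type*} [NormedAddCommGroup E] [InnerProductSpace ℝ E]
    (f : E → ℝ) (hf : ConvexOn ℝ Set.univ f)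
    (ρ η : ℝ) (hρ : 0 < ρ) (hη : 0 < η)
    (wt0 wbar0 γ0 ξ g : E)
    (hg : ∀ z : E, f z ≥ f wt0 + ⟪g, z - wt0⟫)
    (wt1 : E)
    (hwt1 : wt1 = (ρ + 1 / η)⁻¹ • (-g + γ0 + ρ • wbar0 + (1 / η) • wt0) + ξ)
    (wbar1 : E) (γ1 : E) (hγ1 : γ1 = γ0 - ρ • (wt1 - wbar1)) :
    ∀ w : E,
      f wt0 - f w + ⟪wt1 - w, -γ1⟫ ≤
        η / 2 * ‖g - (ρ + 1 / η) • ξ‖ ^ 2 - (ρ + 1 / η) * ⟪ξ, w - wt0⟫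
        + 1 / (2 * η) * (‖w - wt0‖ ^ 2 - ‖w - wt1‖ ^ 2)
        + ρ / 2 * (‖w - wbar0‖ ^ 2 - ‖w - wbar1‖ ^ 2)
        + 1 / (2 * ρ) * ‖γ1 - γ0‖ ^ 2 :=
  dp_admm_per_agent_nonsmooth_general hρ hη hg hwt1 hγ1
end

section
/- Per-agent single-iteration inequality for a convex smooth objective (inequality (60) in the proof of Lemma 3). Let E be a finite-dimensional real inner product space, let f : E → ℝ be convex and differentiable with L-Lipschitz gradient for some L ≥ 0, let ρ > 0 and η > 0 with 1/η > L, and let w̃₀, w̄₀, γ₀, ξ ∈ E. Define w̃₁ = (ρ + 1/η)⁻¹·(−∇f(w̃₀) + γ₀ + ρ·w̄₀ + (1/η)·w̃₀) + ξ, let w̄₁ ∈ E be arbitrary, and set γ₁ = γ₀ − ρ·(w̃₁ − w̄₁). Then for every w ∈ E: f(w̃₁) − f(w) + ⟨w̃₁ − w, −γ₁⟩ ≤ ((ρ + 1/η)²/(2·(1/η − L)))·‖ξ‖² − (ρ + 1/η)·⟨ξ, w − w̃₀⟩ + (1/(2η))·(‖w − w̃₀‖² − ‖w − w̃₁‖²)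 + (ρ/2)·(‖w − w̄₀‖² − ‖w − w̄₁‖²) + (1/(2ρ))·‖γ₁ − γ₀‖². -/
open scoped RealInnerProductSpace

/-!
The difference `f w̃₁ - f w` is at most `⟪∇f w̃₀, w̃₁ - w⟫ + L / 2 * ‖w̃₁ - w̃₀‖²`: the
gradient at `w̃₀` supports `f` from below at `w`, and `f` stays below its quadratic model at `w̃₁`.
The primal and dual updates together say
`∇f w̃₀ - γ₁ = ρ (w̄₀ - w̄₁) + (1 / η) (w̃₀ - w̃₁) + (ρ + 1 / η) ξ`. Paired with `w̃₁ - w`, the first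
two terms become combinations of squared distances. Among these, `(ρ / 2) ‖w̃₁ - w̄₁‖²` is the dual
increment `(1 / (2ρ)) ‖γ₁ - γ₀‖²`, and `-(1 / (2η)) ‖w̃₁ - w̃₀‖²` absorbs the smoothness error; the
remaining `-((1 / η - L) / 2) ‖w̃₁ - w̃₀‖²` pays for the noise term `(ρ + 1 / η) ⟪ξ, w̃₁ - w̃₀⟫`
through Young's inequality.
-/

section Smoothness

open AffineMap Set

theorem le_quadratic_of_derivWithin_le_affine {φ φ' : ℝ → ℝ} {a b m c : ℝ} (hab : a ≤ b)
    (hφ : ∀ t ∈ Icc a b, HasDerivWithinAt φ (φ' t) (Icc a b) t)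
    (hφ' : ∀ t ∈ Icc a b, φ' t ≤ m + c * (t - a)) :
    φ b ≤ φ a + m * (b - a) + c / 2 * (b - a) ^ 2 := by
  have hmodel : ∀ t : ℝ, HasDerivAt (fun t => φ a + m * (t - a) + c / 2 * (t - a) ^ 2)
      (m + c * (t - a)) t := fun t => by
    have hshift : HasDerivAt (fun t => t - a) 1 t := (hasDerivAt_id t).sub_const a
    refine (((hshift.const_mul m).const_add (φ a)).add
      ((hshift.pow 2).const_mul (c / 2))).congr_deriv ?_
    push_cast
    ring
  exact image_le_of_deriv_right_le_deriv_boundary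
    (fun t ht => (hφ t ht).continuousWithinAt)
    (fun t ht => (hφ t (Ico_subset_Icc_self ht)).mono_of_mem_nhdsWithin
      (Icc_mem_nhdsGE_of_mem ht))
    (by simp) (fun t _ => (hmodel t).continuousAt.continuousWithinAt)
    (fun t _ => (hmodel t).hasDerivWithinAt)
    (fun t ht => hφ' t (Ico_subset_Icc_self ht)) (right_mem_Icc.2 hab)

variable {E : Type*} [NormedAddCommGroup E] [NormedSpace ℝ E] {s : Set E} {x y : E}

theorem hasDerivWithinAt_comp_lineMap_of_convex
    {F : Type*} [NormedAddCommGroup F] [NormedSpace ℝ F] {f : E → F} {f' : E →L[ℝ] F} {t : ℝ}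
    (hs : Convex ℝ s) (hx : x ∈ s) (hy : y ∈ s)
    (hf : HasFDerivWithinAt f f' s (lineMap x y t)) :
    HasDerivWithinAt (f ∘ lineMap x y) (f' (y - x)) (Icc 0 1) t :=
  hf.comp_hasDerivWithinAt t hasDerivWithinAt_lineMap fun _ hr => hs.lineMap_mem hx hy hr

theorem add_fderivWithin_sub_le_of_convexOn {f : E → ℝ} {f' : E →L[ℝ] ℝ}
    (hf : ConvexOn ℝ s f) (hx : x ∈ s) (hy : y ∈ s) (hf' : HasFDerivWithinAt f f' s x) :
    f x + f' (y - x) ≤ f y := by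
  have hconv : ConvexOn ℝ (Icc (0 : ℝ) 1) (f ∘ lineMap x y) :=
    (hf.comp_affineMap (lineMap x y)).subset (fun _ hr => hf.1.lineMap_mem hx hy hr)
      (convex_Icc 0 1)
  have hderiv : HasDerivWithinAt (f ∘ lineMap x y) (f' (y - x)) (Icc (0 : ℝ) 1) 0 :=
    hasDerivWithinAt_comp_lineMap_of_convex hf.1 hx hy (by rwa [lineMap_apply_zero])
  have hslope := hconv.le_slope_of_hasDerivWithinAt (by simp) (by simp) one_pos hderiv
  simp only [slope_def_field, Function.comp_apply, lineMap_apply_zero, lineMap_apply_one,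
    sub_zero, div_one] at hslope
  linarith

theorem le_quadratic_of_lipschitz_fderivWithin {f : E → ℝ} {f' : E → E →L[ℝ] ℝ} {L : ℝ}
    (hs : Convex ℝ s) (hx : x ∈ s) (hy : y ∈ s)
    (hf : ∀ z ∈ s, HasFDerivWithinAt f (f' z) s z)
    (hL : ∀ z ∈ s, ‖f' z - f' x‖ ≤ L * ‖z - x‖) :
    f y ≤ f x + f' x (y - x) + L / 2 * ‖y - x‖ ^ 2 := by
  have hmem : ∀ t ∈ Icc (0 : ℝ) 1, lineMap x y t ∈ s := fun t ht => hs.lineMap_mem hx hy ht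
  have hderiv : ∀ t ∈ Icc (0 : ℝ) 1, HasDerivWithinAt (f ∘ lineMap x y)
      (f' (lineMap x y t) (y - x)) (Icc 0 1) t := fun t ht =>
    hasDerivWithinAt_comp_lineMap_of_convex hs hx hy (hf _ (hmem t ht))
  have hslope : ∀ t ∈ Icc (0 : ℝ) 1,
      f' (lineMap x y t) (y - x) ≤ f' x (y - x) + L * ‖y - x‖ ^ 2 * (t - 0) := fun t ht => by
    rw [← sub_le_iff_le_add', ← sub_apply]
    calc (f' (lineMap x y t) - f' x) (y - x)
        ≤ ‖f' (lineMap x y t) - f' x‖ * ‖y - x‖ :=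
          (le_abs_self _).trans ((f' (lineMap x y t) - f' x).le_opNorm (y - x))
      _ ≤ L * ‖lineMap x y t - x‖ * ‖y - x‖ := by
          gcongr
          exact hL _ (hmem t ht)
      _ = L * ‖y - x‖ ^ 2 * (t - 0) := by
          rw [← vsub_eq_sub (lineMap x y t), lineMap_vsub_left, vsub_eq_sub, norm_smul,
            Real.norm_of_nonneg ht.1]
          ring
  have hle := le_quadratic_of_derivWithin_le_affine zero_le_one hderiv hslope
  simp only [Function.comp_apply, lineMap_apply_zero, lineMap_apply_one] at hle
  linarith

end Smoothness

theorem sub_le_inner_gradient_add_sq_of_convexOn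
    {E : Type*} [NormedAddCommGroup E] [InnerProductSpace ℝ E] [CompleteSpace E]
    {f : E → ℝ} {L : ℝ} {x : E} (hf : ConvexOn ℝ Set.univ f) (hdiff : Differentiable ℝ f)
    (hL : ∀ z, ‖gradient f z - gradient f x‖ ≤ L * ‖z - x‖) (y w : E) :
    f y - f w ≤ ⟪gradient f x, y - w⟫ + L / 2 * ‖y - x‖ ^ 2 := by
  have hgrad : ∀ z,
      HasFDerivWithinAt f (InnerProductSpace.toDual ℝ E (gradient f z)) Set.univ z := fun z =>
    (hdiff z).hasGradientAt.hasFDerivAt.hasFDerivWithinAt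
  have hlower := add_fderivWithin_sub_le_of_convexOn hf (Set.mem_univ x) (Set.mem_univ w)
    (hgrad x)
  have hupper := le_quadratic_of_lipschitz_fderivWithin convex_univ (Set.mem_univ x)
    (Set.mem_univ y) (fun z _ => hgrad z) (fun z _ => by
      rw [← map_sub, LinearIsometryEquiv.norm_map]
      exact hL z)
  simp only [InnerProductSpace.toDual_apply_apply, inner_sub_right] at hlower hupper ⊢
  linarith

section InnerProduct

variable {E : Type*} [SeminormedAddCommGroup E] [InnerProductSpace ℝ E]

theorem real_inner_le_norm_sq_div_add_mul_norm_sq {s : ℝ} (hs : 0 < s) (x y : E) :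
    ⟪x, y⟫ ≤ ‖x‖ ^ 2 / (2 * s) + s / 2 * ‖y‖ ^ 2 := by
  have hyoung : 2 * ‖y‖ * ‖x‖ ≤ s * ‖y‖ ^ 2 + s⁻¹ * ‖x‖ ^ 2 := two_mul_le_add_mul_sq hs
  calc ⟪x, y⟫ ≤ ‖x‖ * ‖y‖ := real_inner_le_norm x y
    _ ≤ (s * ‖y‖ ^ 2 + s⁻¹ * ‖x‖ ^ 2) / 2 := by linarith
    _ = ‖x‖ ^ 2 / (2 * s) + s / 2 * ‖y‖ ^ 2 := by
        field_simp
        ring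

theorem real_inner_sub_sub_eq_norm_sub_sq (a b c d : E) :
    ⟪a - b, c - d⟫ =
      (‖d - a‖ ^ 2 - ‖d - b‖ ^ 2 + ‖c - b‖ ^ 2 - ‖c - a‖ ^ 2) / 2 := by
  simp only [norm_sub_sq_real, inner_sub_left, inner_sub_right, real_inner_comm a,
    real_inner_comm b]
  ring

end InnerProduct

theorem gradient_sub_dual_eq_of_linearized_admm_step
    {𝕜 E : Type*} [Field 𝕜] [AddCommGroup E] [Module 𝕜 E] {ρ β : 𝕜} (hρβ : ρ + β ≠ 0)
    {g γ₀ γ₁ x₀ x₁ z₀ z₁ ξ : E}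
    (hx₁ : x₁ = (ρ + β)⁻¹ • (-g + γ₀ + ρ • z₀ + β • x₀) + ξ)
    (hγ₁ : γ₁ = γ₀ - ρ • (x₁ - z₁)) :
    g - γ₁ = ρ • (z₀ - z₁) + β • (x₀ - x₁) + (ρ + β) • ξ := by
  have hprimal : (ρ + β) • (x₁ - ξ) = -g + γ₀ + ρ • z₀ + β • x₀ := by
    rw [hx₁, add_sub_cancel_right, smul_inv_smul₀ hρβ]
  have hg : g = γ₀ + ρ • z₀ + β • x₀ - (ρ + β) • (x₁ - ξ) := by
    rw [hprimal]
    abel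
  rw [hg, hγ₁]
  module

theorem dp_admm_per_agent_smooth_general
    {E : Type*} [NormedAddCommGroup E] [InnerProductSpace ℝ E] [CompleteSpace E]
    (f : E → ℝ) (L : ℝ)
    (hf : ConvexOn ℝ Set.univ f) (hdiff : Differentiable ℝ f)
    (hlip : ∀ x y : E, ‖gradient f x - gradient f y‖ ≤ L * ‖x - y‖)
    (ρ η : ℝ) (hρ : 0 < ρ) (hη : 0 < η) (hηL : L < 1 / η)
    (wt0 wbar0 γ0 ξ : E)
    (wt1 : E)
    (hwt1 : wt1 = (ρ + 1 / η)⁻¹ •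
      (-(gradient f wt0) + γ0 + ρ • wbar0 + (1 / η) • wt0) + ξ)
    (wbar1 : E) (γ1 : E) (hγ1 : γ1 = γ0 - ρ • (wt1 - wbar1)) :
    ∀ w : E,
      f wt1 - f w + ⟪wt1 - w, -γ1⟫ ≤
        (ρ + 1 / η) ^ 2 / (2 * (1 / η - L)) * ‖ξ‖ ^ 2 - (ρ + 1 / η) * ⟪ξ, w - wt0⟫
        + 1 / (2 * η) * (‖w - wt0‖ ^ 2 - ‖w - wt1‖ ^ 2)
        + ρ / 2 * (‖w - wbar0‖ ^ 2 - ‖w - wbar1‖ ^ 2)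
        + 1 / (2 * ρ) * ‖γ1 - γ0‖ ^ 2 := by
  intro w
  have hβ : 0 < 1 / η := by positivity
  have hstep : gradient f wt0 - γ1 =
      ρ • (wbar0 - wbar1) + (1 / η) • (wt0 - wt1) + (ρ + 1 / η) • ξ :=
    gradient_sub_dual_eq_of_linearized_admm_step (add_pos hρ hβ).ne' hwt1 hγ1
  have hobj := sub_le_inner_gradient_add_sq_of_convexOn hf hdiff (hlip · wt0) wt1 w
  have hpair : ⟪gradient f wt0, wt1 - w⟫ + ⟪wt1 - w, -γ1⟫ =
      ρ * ⟪wbar0 - wbar1, wt1 - w⟫ + 1 / η * ⟪wt0 - wt1, wt1 - w⟫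
        + (ρ + 1 / η) * ⟪ξ, wt1 - w⟫ := by
    rw [real_inner_comm, ← inner_add_right, ← sub_eq_add_neg, hstep]
    simp only [inner_add_right, real_inner_smul_right, real_inner_comm (wt1 - w)]
  have hnoise : (ρ + 1 / η) * ⟪ξ, wt1 - w⟫ ≤ (ρ + 1 / η) ^ 2 / (2 * (1 / η - L)) * ‖ξ‖ ^ 2
      + (1 / η - L) / 2 * ‖wt1 - wt0‖ ^ 2 - (ρ + 1 / η) * ⟪ξ, w - wt0⟫ := by
    have hyoung := real_inner_le_norm_sq_div_add_mul_norm_sq (sub_pos.2 hηL)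
      ((ρ + 1 / η) • ξ) (wt1 - wt0)
    rw [norm_smul, mul_pow, Real.norm_eq_abs, sq_abs, mul_div_right_comm,
      real_inner_smul_left] at hyoung
    rw [← sub_sub_sub_cancel_right wt1 w wt0, inner_sub_right]
    linarith
  have hdual : 1 / (2 * ρ) * ‖γ1 - γ0‖ ^ 2 = ρ / 2 * ‖wt1 - wbar1‖ ^ 2 := by
    rw [hγ1, sub_sub_cancel_left, norm_neg, norm_smul, Real.norm_of_nonneg hρ.le]
    field_simp
  have hpenalty : 0 ≤ ρ / 2 * ‖wt1 - wbar0‖ ^ 2 := by positivity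
  have hhalf : 1 / (2 * η) = 1 / η / 2 := by rw [mul_comm, div_div]
  rw [real_inner_sub_sub_eq_norm_sub_sq wbar0, real_inner_sub_sub_eq_norm_sub_sq wt0,
    sub_self wt1, norm_zero] at hpair
  rw [hdual, hhalf]
  linarith

/-- Per-agent single-iteration inequality for a convex smooth objective
(inequality (60) in the proof of Lemma 3). -/
theorem dp_admm_per_agent_smooth
    {E : Type*} [NormedAddCommGroup E] [InnerProductSpace ℝ E] [FiniteDimensional ℝ E]
    (f : E → ℝ) (L : ℝ) (hL : 0 ≤ L)
    (hf : ConvexOn ℝ Set.univ f) (hdiff : Differentiable ℝ f)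
    (hlip : ∀ x y : E, ‖gradient f x - gradient f y‖ ≤ L * ‖x - y‖)
    (ρ η : ℝ) (hρ : 0 < ρ) (hη : 0 < η) (hηL : L < 1 / η)
    (wt0 wbar0 γ0 ξ : E)
    (wt1 : E)
    (hwt1 : wt1 = (ρ + 1 / η)⁻¹ •
      (-(gradient f wt0) + γ0 + ρ • wbar0 + (1 / η) • wt0) + ξ)
    (wbar1 : E) (γ1 : E) (hγ1 : γ1 = γ0 - ρ • (wt1 - wbar1)) :
    ∀ w : E,
      f wt1 - f w + ⟪wt1 - w, -γ1⟫ ≤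
        (ρ + 1 / η) ^ 2 / (2 * (1 / η - L)) * ‖ξ‖ ^ 2 - (ρ + 1 / η) * ⟪ξ, w - wt0⟫
        + 1 / (2 * η) * (‖w - wt0‖ ^ 2 - ‖w - wt1‖ ^ 2)
        + ρ / 2 * (‖w - wbar0‖ ^ 2 - ‖w - wbar1‖ ^ 2)
        + 1 / (2 * ρ) * ‖γ1 - γ0‖ ^ 2 :=
  dp_admm_per_agent_smooth_general f L hf hdiff hlip ρ η hρ hη hηL wt0 wbar0 γ0 ξ wt1 hwt1 wbar1
    γ1 hγ1
end
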